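/- arXiv:1404.1056 — 2 statements merged into one kernel-verified Lean document; each statement's English description precedes it below -/
import Mathlib

section
/- For k = 9 and every deterministic online algorithm A for bin packing with cardinality constraint k, the asymptotic competitive ratio of A is at least 189/124: for every ε > 0 and every N there exists an input L with OPT(L) ≥ N and A(L) ≥ (189/124 − ε)·OPT(L). -/
/-!
The adversary presents `36 M` items of size `0.010` and then `72 M` items of each of the sizes
`0.143`, `0.334` and `0.501`. It may stop after any of these four phases.

The optima at the ends of the phases are at most `4 M`, `12 M`, `36 M` and `72 M`, in total `124 M`.

Online, give the items of the four phases the weights `1, 2, 4, 4`, in total `756 M = 4 * 189 M`.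
A bin first used in phase `1, 2, 3, 4` has weight at most `16, 12, 8, 4`: four times the number of
phases at whose end it is open. Summing over all bins, the numbers of open bins at the ends of the
four phases add up to at least `189 M`. So the ratio is at least `189 / 124` at the end of some
phase.
-/

open scoped Classical
noncomputable section

/-- An input is a list of item sizes, each in (0,1]. -/
def ValidInput (L : List ℝ) : Prop := ∀ x ∈ L, 0 < x ∧ x ≤ 1

/-- A packing assigns a bin index to each item; it is feasible for cardinality
constraint `k` if every bin receives at most `k` items of total size at most 1. -/
def IsFeasible (k : ℕ) (L : List ℝ) (f : Fin L.length → ℕ) : Prop :=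
  ∀ b : ℕ,
    (Finset.univ.filter (fun i => f i = b)).card ≤ k ∧
    ∑ i ∈ Finset.univ.filter (fun i => f i = b), L.get i ≤ 1

/-- The number of bins used by a packing. -/
def binsUsed (L : List ℝ) (f : Fin L.length → ℕ) : ℕ :=
  (Finset.univ.image f).card

/-- The optimal (minimum) number of bins in a feasible packing of `L`. -/
def OPT (k : ℕ) (L : List ℝ) : ℕ :=
  sInf {n | ∃ f : Fin L.length → ℕ, IsFeasible k L f ∧ binsUsed L f = n}

/-- A deterministic online algorithm is a strategy: given the items seen so far
(ending with the item to be packed), it returns the bin index for that item. -/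
def onlinePacking (A : List ℝ → ℕ) (L : List ℝ) : Fin L.length → ℕ :=
  fun i => A (L.take (i.1 + 1))

/-- The strategy `A` is a valid online algorithm for cardinality constraint `k`
if on every valid input the induced packing is feasible. -/
def OnlineValid (k : ℕ) (A : List ℝ → ℕ) : Prop :=
  ∀ L : List ℝ, ValidInput L → IsFeasible k L (onlinePacking A L)

/-- The number of bins used by online algorithm `A` on input `L`. -/
def onlineBins (A : List ℝ → ℕ) (L : List ℝ) : ℕ :=
  binsUsed L (onlinePacking A L)

/-- The state of First Fit: a list of open bins (in order of opening),
each recorded as (number of items, total size). `ffFind` returns the index of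
the first bin that can receive an item of size `x` (it has at most `k-1` items
and the item fits); if none, the index of a new bin. -/
def ffFind (k : ℕ) (x : ℝ) : List (ℕ × ℝ) → ℕ
  | [] => 0
  | b :: bs => if b.1 < k ∧ b.2 + x ≤ 1 then 0 else ffFind k x bs + 1

/-- Update the First Fit state after packing an item of size `x`. -/
def ffUpdate (k : ℕ) (x : ℝ) : List (ℕ × ℝ) → List (ℕ × ℝ)
  | [] => [(1, x)]
  | b :: bs =>
      if b.1 < k ∧ b.2 + x ≤ 1 then (b.1 + 1, b.2 + x) :: bs
      else b :: ffUpdate k x bs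

/-- The final state of First Fit with cardinality constraint `k` on input `L`. -/
def ffState (k : ℕ) (L : List ℝ) : List (ℕ × ℝ) :=
  L.foldl (fun bs x => ffUpdate k x bs) []

/-- The number of bins used by First Fit with cardinality constraint `k` on `L`. -/
def FF (k : ℕ) (L : List ℝ) : ℕ := (ffState k L).length

/-- The bin index into which First Fit packs the `i`-th item of `L`. -/
def ffAssign (k : ℕ) (L : List ℝ) (i : Fin L.length) : ℕ :=
  ffFind k (L.get i) (ffState k (L.take i.1))

variable {k : ℕ} {A : List ℝ → ℕ} {L L' : List ℝ} {b : ℕ}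

/-- A multiset `B` of item sizes is a feasible bin content for cardinality constraint `k`. -/
def IsBin (k : ℕ) (B : Multiset ℝ) : Prop := Multiset.card B ≤ k ∧ B.sum ≤ 1

/-- The multiset of sizes of the items that the packing `f` puts into bin `b`. -/
def binContent (L : List ℝ) (f : Fin L.length → ℕ) (b : ℕ) : Multiset ℝ :=
  (Finset.univ.filter (fun i => f i = b)).val.map L.get

lemma isFeasible_iff_isBin {f : Fin L.length → ℕ} :
    IsFeasible k L f ↔ ∀ b, IsBin k (binContent L f b) := by
  simp only [IsFeasible, IsBin, binContent, Multiset.card_map, Finset.card_def, Finset.sum]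

lemma mem_binContent {f : Fin L.length → ℕ} {x : ℝ} :
    x ∈ binContent L f b ↔ ∃ i, f i = b ∧ L.get i = x := by
  simp [binContent]

lemma binContent_cons (x : ℝ) (c : ℕ) (f : Fin L.length → ℕ) (b : ℕ) :
    binContent (x :: L) (Fin.cons c f : Fin (L.length + 1) → ℕ) b
      = if c = b then x ::ₘ binContent L f b else binContent L f b := by
  have content_eq_sum (L : List ℝ) (f : Fin L.length → ℕ) :
      binContent L f b = ∑ i, if f i = b then {L.get i} else 0 := by
    rw [binContent, ← Finset.sum_filter, Finset.sum,
      ← Multiset.sum_map_singleton (Multiset.map _ _), Multiset.map_map]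
    rfl
  rw [content_eq_sum, content_eq_sum]
  refine (Fin.sum_univ_succ (n := L.length) _).trans ?_
  by_cases h : c = b <;> simp [h]

lemma sum_binContent_map {β : Type*} [AddCommMonoid β] (f : Fin L.length → ℕ) (w : ℝ → β) :
    ∑ b ∈ Finset.univ.image f, ((binContent L f b).map w).sum = (L.map w).sum := by
  simp only [binContent, Multiset.map_map]
  calc ∑ b ∈ Finset.univ.image f, ∑ i with f i = b, w (L.get i)
      = ∑ i, w (L.get i) :=
        Finset.sum_fiberwise_of_maps_to (fun i hi => Finset.mem_image_of_mem f hi) _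
    _ = (L.map w).sum := Fin.sum_univ_fun_getElem L w

/-! ### The optimum -/

lemma exists_binContent_eq (s : Finset ℕ) (B : ℕ → Multiset ℝ)
    (hL : (L : Multiset ℝ) = ∑ b ∈ s, B b) :
    ∃ f : Fin L.length → ℕ, (∀ i, f i ∈ s) ∧ ∀ b ∈ s, binContent L f b = B b := by
  induction L generalizing B with
  | nil =>
    refine ⟨Fin.elim0, fun i => i.elim0, fun b hb => ?_⟩
    have hB : B b = 0 := (Finset.sum_eq_zero_iff.1 hL.symm) b hb
    rw [hB]
    rfl
  | cons x L ih =>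
    obtain ⟨c, hc, hx⟩ : ∃ c ∈ s, x ∈ B c := by
      rw [← Multiset.mem_sum, ← hL]
      simp
    have hrest : (L : Multiset ℝ) = ∑ b ∈ s, Function.update B c ((B c).erase x) b := by
      rw [Finset.sum_update_of_mem hc, ← Multiset.cons_inj_right x, ← Multiset.cons_add,
        Multiset.cons_erase hx, Multiset.cons_coe, hL, ← Finset.add_sum_erase s B hc,
        Finset.sdiff_singleton_eq_erase]
    obtain ⟨f, hfs, hf⟩ := ih _ hrest
    refine ⟨(Fin.cons c f : Fin (L.length + 1) → ℕ), Fin.cases hc hfs, fun b hb => ?_⟩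
    rw [binContent_cons, hf b hb]
    by_cases h : c = b
    · subst h
      simp [Multiset.cons_erase hx]
    · simp [h, Function.update_of_ne (Ne.symm h)]

lemma exists_isFeasible_binsUsed_le (Q : Multiset (Multiset ℝ)) (hQ : ∀ B ∈ Q, IsBin k B)
    (hL : (L : Multiset ℝ) = Q.sum) :
    ∃ f, IsFeasible k L f ∧ binsUsed L f ≤ Multiset.card Q := by
  obtain ⟨l, rfl⟩ := Quot.exists_rep Q
  have hsum : (L : Multiset ℝ) = ∑ b ∈ Finset.range l.length, l.getD b 0 := by
    rw [Finset.sum_range]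
    simp only [Fin.is_lt, List.getD_eq_getElem, Fin.sum_univ_getElem]
    exact hL
  obtain ⟨f, hf, hcontent⟩ := exists_binContent_eq _ _ hsum
  refine ⟨f, isFeasible_iff_isBin.2 fun b => ?_, ?_⟩
  · by_cases hb : b < l.length
    · rw [hcontent b (Finset.mem_range.2 hb), List.getD_eq_getElem _ _ hb]
      exact hQ _ (List.getElem_mem hb)
    · have hempty : binContent L f b = 0 :=
        Multiset.eq_zero_of_forall_notMem fun x hx => by
          obtain ⟨i, rfl, -⟩ := mem_binContent.1 hx
          exact hb (Finset.mem_range.1 (hf i))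
      simp [hempty, IsBin]
  · exact (Finset.card_le_card (Finset.image_subset_iff.2 fun i _ => hf i)).trans_eq
      (Finset.card_range _)

lemma OPT_le_binsUsed {f : Fin L.length → ℕ} (hf : IsFeasible k L f) : OPT k L ≤ binsUsed L f :=
  Nat.sInf_le ⟨f, hf, rfl⟩

lemma OPT_le_card (Q : Multiset (Multiset ℝ)) (hQ : ∀ B ∈ Q, IsBin k B)
    (hL : (L : Multiset ℝ) = Q.sum) : OPT k L ≤ Multiset.card Q :=
  have ⟨_, hf, hcard⟩ := exists_isFeasible_binsUsed_le Q hQ hL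
  (OPT_le_binsUsed hf).trans hcard

lemma OPT_le_of_coe_eq_nsmul {B : Multiset ℝ} {m : ℕ} (hB : IsBin k B)
    (hL : (L : Multiset ℝ) = m • B) : OPT k L ≤ m := by
  simpa using OPT_le_card (.replicate m B) (fun _ hC => Multiset.eq_of_mem_replicate hC ▸ hB)
    (by rw [hL, Multiset.sum_replicate])

lemma OPT_le_of_coe_eq_nsmul_add_nsmul {B C : Multiset ℝ} {m n : ℕ} (hB : IsBin k B)
    (hC : IsBin k C) (hL : (L : Multiset ℝ) = m • B + n • C) : OPT k L ≤ m + n := by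
  have hQ : ∀ D ∈ Multiset.replicate m B + Multiset.replicate n C, IsBin k D := by
    intro D hD
    rcases Multiset.mem_add.1 hD with h | h <;> rwa [Multiset.eq_of_mem_replicate h]
  simpa using OPT_le_card _ hQ
    (by rw [hL, Multiset.sum_add, Multiset.sum_replicate, Multiset.sum_replicate])

lemma exists_isFeasible (hk : 0 < k) (hL : ValidInput L) : ∃ f, IsFeasible k L f := by
  have hQ : ∀ B ∈ Multiset.map (fun x : ℝ => ({x} : Multiset ℝ)) L, IsBin k B := by
    intro B hB
    obtain ⟨x, hx, rfl⟩ := Multiset.mem_map.1 hB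
    simpa [IsBin] using ⟨hk, (hL x hx).2⟩
  obtain ⟨f, hf, -⟩ := exists_isFeasible_binsUsed_le _ hQ (Multiset.sum_map_singleton _).symm
  exact ⟨f, hf⟩

lemma length_le_mul_OPT (hk : 0 < k) (hL : ValidInput L) : L.length ≤ k * OPT k L := by
  obtain ⟨f₀, hf₀⟩ := exists_isFeasible hk hL
  obtain ⟨f, hf, hOPT⟩ := Nat.sInf_mem
    (s := {n | ∃ f : Fin L.length → ℕ, IsFeasible k L f ∧ binsUsed L f = n}) ⟨_, f₀, hf₀, rfl⟩
  calc L.length = (Finset.univ : Finset (Fin L.length)).card := (Finset.card_fin _).symm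
    _ ≤ k * binsUsed L f := Finset.card_le_mul_card_image _ k fun b _ => (hf b).1
    _ = k * OPT k L := congrArg (k * ·) hOPT

/-! ### Online algorithms -/

/-- The set of (labels of) bins that contain an item after the online algorithm `A` has processed
`L`. -/
def openBins (A : List ℝ → ℕ) (L : List ℝ) : Finset ℕ := Finset.univ.image (onlinePacking A L)

lemma mem_openBins : b ∈ openBins A L ↔ ∃ i < L.length, A (L.take (i + 1)) = b := by
  simp [openBins, onlinePacking, Fin.exists_iff]

lemma openBins_mono (h : L <+: L') : openBins A L ⊆ openBins A L' := by
  obtain ⟨R, rfl⟩ := h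
  intro b hb
  obtain ⟨i, hi, rfl⟩ := mem_openBins.1 hb
  exact mem_openBins.2 ⟨i, by simp; omega, by rw [List.take_append_of_le_length hi]⟩

lemma mem_right_of_mem_binContent_append {x : ℝ} (hb : b ∉ openBins A L)
    (hx : x ∈ binContent (L ++ L') (onlinePacking A (L ++ L')) b) : x ∈ L' := by
  obtain ⟨i, hib, rfl⟩ := mem_binContent.1 hx
  have hi : L.length ≤ i := by
    by_contra! hi
    refine hb (mem_openBins.2 ⟨i, hi, ?_⟩)
    rwa [onlinePacking, List.take_append_of_le_length hi] at hib
  rw [List.get_eq_getElem, List.getElem_append_right hi]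
  exact List.getElem_mem _

section Weights

variable {β : Type*} [AddCommMonoid β] [PartialOrder β] {P : List (List ℝ)} {w : ℝ → β} {c : ℕ → β}

lemma sum_weight_binContent_le (hA : IsFeasible k P.flatten (onlinePacking A P.flatten))
    (hw : ∀ j < P.length, ∀ B, IsBin k B → (∀ x ∈ B, x ∈ (P.drop j).flatten) →
      (B.map w).sum ≤ ∑ i ∈ Finset.Ico j P.length, c i)
    (hb : b ∈ openBins A P.flatten) :
    ((binContent P.flatten (onlinePacking A P.flatten) b).map w).sum
      ≤ ∑ i ∈ Finset.range P.length,
          if b ∈ openBins A (P.take (i + 1)).flatten then c i else 0 := by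
  have hopen : ∃ n, b ∈ openBins A (P.take n).flatten := ⟨P.length, by rwa [List.take_length]⟩
  obtain ⟨j, hj⟩ : ∃ j, Nat.find hopen = j + 1 := by
    refine Nat.exists_eq_succ_of_ne_zero fun h0 => ?_
    have hopen_zero := Nat.find_spec hopen
    rw [h0] at hopen_zero
    simp [mem_openBins] at hopen_zero
  have hopen_iff (n : ℕ) : b ∈ openBins A (P.take n).flatten ↔ j + 1 ≤ n := by
    rw [← hj]
    exact ⟨Nat.find_min' hopen,
      fun hn => openBins_mono (List.take_prefix_take_left hn).flatten (Nat.find_spec hopen)⟩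
  have hjP : j < P.length := (hopen_iff P.length).1 (by rwa [List.take_length])
  have hnotMem : b ∉ openBins A (P.take j).flatten := by simp [hopen_iff]
  have hcontent : ∀ x ∈ binContent P.flatten (onlinePacking A P.flatten) b,
      x ∈ (P.drop j).flatten := by
    intro x hx
    refine mem_right_of_mem_binContent_append hnotMem ?_
    rwa [← List.flatten_append, List.take_append_drop]
  calc _ ≤ ∑ i ∈ Finset.Ico j P.length, c i :=
        hw j hjP _ (isFeasible_iff_isBin.1 hA b) hcontent
    _ = ∑ i ∈ Finset.range P.length,
          if b ∈ openBins A (P.take (i + 1)).flatten then c i else 0 := by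
        rw [← Finset.sum_filter]
        refine Finset.sum_congr ?_ fun _ _ => rfl
        ext i
        simp only [hopen_iff, Finset.mem_Ico, Finset.mem_filter, Finset.mem_range]
        omega

/-- The weighting method for an input presented in phases `P`, after each of which the adversary may
stop: a bin opened in phase `j` is charged `c i` at the end of every phase `i ≥ j`. -/
theorem sum_weight_le_sum_onlineBins [IsOrderedAddMonoid β]
    (hA : IsFeasible k P.flatten (onlinePacking A P.flatten))
    (hw : ∀ j < P.length, ∀ B, IsBin k B → (∀ x ∈ B, x ∈ (P.drop j).flatten) →
      (B.map w).sum ≤ ∑ i ∈ Finset.Ico j P.length, c i) :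
    (P.flatten.map w).sum
      ≤ ∑ i ∈ Finset.range P.length, onlineBins A (P.take (i + 1)).flatten • c i := by
  have hsubset (n : ℕ) : openBins A (P.take n).flatten ⊆ openBins A P.flatten :=
    openBins_mono (List.take_prefix n P).flatten
  calc (P.flatten.map w).sum
      = ∑ b ∈ openBins A P.flatten,
          ((binContent P.flatten (onlinePacking A P.flatten) b).map w).sum :=
        (sum_binContent_map _ w).symm
    _ ≤ ∑ b ∈ openBins A P.flatten, ∑ i ∈ Finset.range P.length,
          if b ∈ openBins A (P.take (i + 1)).flatten then c i else 0 :=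
        Finset.sum_le_sum fun b hb => sum_weight_binContent_le hA hw hb
    _ = ∑ i ∈ Finset.range P.length, onlineBins A (P.take (i + 1)).flatten • c i := by
        rw [Finset.sum_comm]
        refine Finset.sum_congr rfl fun i _ => ?_
        rw [Finset.sum_ite_mem, Finset.inter_eq_right.2 (hsubset _), Finset.sum_const]
        rfl

end Weights

/-! ### The adversarial input and its optimum -/

/-- The four phases of the adversarial input. The last three sizes are just above `1/7`, `1/3` and
`1/2`. The first has to be at most `0.022`, so that the four sizes fit together into one bin, and
larger than `0.0092`, so that a bin cannot hold `5, 2, 2, 0` items of the four sizes, which would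
have `weight` more than `16`. -/
def phases (M : ℕ) : List (List ℝ) :=
  [List.replicate (36 * M) (10 / 1000), List.replicate (72 * M) (143 / 1000),
    List.replicate (72 * M) (334 / 1000), List.replicate (72 * M) (501 / 1000)]

/-- The multiset with `n₁, n₂, n₃, n₄` items of the four sizes that occur in `phases`; it describes
both bin contents and prefixes of the input. -/
def bag (n₁ n₂ n₃ n₄ : ℕ) : Multiset ℝ :=
  Multiset.replicate n₁ (10 / 1000) + Multiset.replicate n₂ (143 / 1000)
    + Multiset.replicate n₃ (334 / 1000) + Multiset.replicate n₄ (501 / 1000)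

/-- The weight of an item of size `x` in the lower bound on the online algorithm: `1, 2, 4, 4` for
the sizes that occur in the four `phases`, chosen such that a bin that gets items only from the last
`j` phases has weight at most `4 * j`. -/
def weight (x : ℝ) : ℕ := if x < 143 / 1000 then 1 else if x < 334 / 1000 then 2 else 4

lemma length_phases (M : ℕ) : (phases M).length = 4 := rfl

lemma validInput_flatten_take_phases (M n : ℕ) : ValidInput ((phases M).take n).flatten := by
  intro x hx
  obtain ⟨l, hl, hxl⟩ := List.mem_flatten.1 hx
  have hl' := List.mem_of_mem_take hl
  simp only [phases, List.mem_cons, List.not_mem_nil, or_false] at hl'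
  rcases hl' with rfl | rfl | rfl | rfl <;> rw [List.eq_of_mem_replicate hxl] <;> norm_num

lemma isBin_bag {n₁ n₂ n₃ n₄ : ℕ} (hcard : n₁ + n₂ + n₃ + n₄ ≤ k)
    (hsize : 10 * n₁ + 143 * n₂ + 334 * n₃ + 501 * n₄ ≤ 1000) : IsBin k (bag n₁ n₂ n₃ n₄) := by
  have hsize' : (10 * n₁ + 143 * n₂ + 334 * n₃ + 501 * n₄ : ℝ) ≤ 1000 := by exact_mod_cast hsize
  refine ⟨by simpa [bag] using hcard, ?_⟩
  simp only [bag, Multiset.sum_add, Multiset.sum_replicate, nsmul_eq_mul]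
  linarith

lemma nsmul_bag (m n₁ n₂ n₃ n₄ : ℕ) :
    m • bag n₁ n₂ n₃ n₄ = bag (m * n₁) (m * n₂) (m * n₃) (m * n₄) := by
  simp only [bag, nsmul_add, Multiset.nsmul_replicate]

lemma bag_add_bag (m₁ m₂ m₃ m₄ n₁ n₂ n₃ n₄ : ℕ) :
    bag m₁ m₂ m₃ m₄ + bag n₁ n₂ n₃ n₄ = bag (m₁ + n₁) (m₂ + n₂) (m₃ + n₃) (m₄ + n₄) := by
  simp only [bag, Multiset.replicate_add]
  abel

lemma OPT_take_one_phases_le (M : ℕ) : OPT 9 ((phases M).take 1).flatten ≤ 4 * M := by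
  refine OPT_le_of_coe_eq_nsmul (B := bag 9 0 0 0) (isBin_bag (by norm_num) (by norm_num)) ?_
  rw [nsmul_bag]
  simp only [phases, bag, List.take_succ_cons, List.take_zero, List.flatten_cons, List.flatten_nil,
    List.append_nil, Multiset.coe_replicate, mul_zero, Multiset.replicate_zero, add_zero]
  ring_nf

lemma OPT_take_two_phases_le (M : ℕ) : OPT 9 ((phases M).take 2).flatten ≤ 12 * M := by
  refine OPT_le_of_coe_eq_nsmul (B := bag 3 6 0 0) (isBin_bag (by norm_num) (by norm_num)) ?_
  rw [nsmul_bag]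
  simp only [phases, bag, List.take_succ_cons, List.take_zero, List.flatten_cons, List.flatten_nil,
    List.append_nil, ← Multiset.coe_add, Multiset.coe_replicate, mul_zero, Multiset.replicate_zero,
    add_zero]
  ring_nf

lemma OPT_take_three_phases_le (M : ℕ) : OPT 9 ((phases M).take 3).flatten ≤ 36 * M := by
  refine OPT_le_of_coe_eq_nsmul (B := bag 1 2 2 0) (isBin_bag (by norm_num) (by norm_num)) ?_
  rw [nsmul_bag]
  simp only [phases, bag, List.take_succ_cons, List.take_zero, List.flatten_cons, List.flatten_nil,
    List.append_nil, ← Multiset.coe_add, Multiset.coe_replicate, mul_zero, Multiset.replicate_zero,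
    add_zero, add_assoc]
  ring_nf

lemma OPT_flatten_phases_le (M : ℕ) : OPT 9 (phases M).flatten ≤ 72 * M := by
  have hcoe : ((phases M).flatten : Multiset ℝ)
      = (36 * M) • bag 1 1 1 1 + (36 * M) • bag 0 1 1 1 := by
    rw [nsmul_bag, nsmul_bag, bag_add_bag]
    simp only [phases, bag, List.flatten_cons, List.flatten_nil, List.append_nil,
      ← Multiset.coe_add, Multiset.coe_replicate, mul_zero, add_zero, add_assoc]
    ring_nf
  have hOPT := OPT_le_of_coe_eq_nsmul_add_nsmul (k := 9) (isBin_bag (by norm_num) (by norm_num))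
    (isBin_bag (by norm_num) (by norm_num)) hcoe
  omega

lemma sum_OPT_phases_le (M : ℕ) :
    ∑ i ∈ Finset.range 4, OPT 9 ((phases M).take (i + 1)).flatten ≤ 124 * M := by
  calc ∑ i ∈ Finset.range 4, OPT 9 ((phases M).take (i + 1)).flatten
      = OPT 9 ((phases M).take 1).flatten + OPT 9 ((phases M).take 2).flatten
        + OPT 9 ((phases M).take 3).flatten + OPT 9 (phases M).flatten := by
        simp [Finset.sum_range_succ, phases]
    _ ≤ 4 * M + 12 * M + 36 * M + 72 * M := by
        gcongr
        exacts [OPT_take_one_phases_le M, OPT_take_two_phases_le M, OPT_take_three_phases_le M,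
          OPT_flatten_phases_le M]
    _ = 124 * M := by ring

/-! ### Weights of bins -/

section BinWeights

variable {B : Multiset ℝ}

lemma card_eq_sum_countP (B : Multiset ℝ) :
    Multiset.card B = B.countP (· < 143 / 1000)
      + B.countP (fun x => 143 / 1000 ≤ x ∧ x < 334 / 1000)
      + B.countP (334 / 1000 ≤ ·) := by
  induction B using Multiset.induction_on with
  | empty => simp
  | cons x B ih =>
    simp only [Multiset.card_cons, Multiset.countP_cons, ih]
    split_ifs <;> grind

lemma sum_weight_eq_sum_countP (B : Multiset ℝ) :
    (B.map weight).sum = B.countP (· < 143 / 1000)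
      + 2 * B.countP (fun x => 143 / 1000 ≤ x ∧ x < 334 / 1000)
      + 4 * B.countP (334 / 1000 ≤ ·) := by
  induction B using Multiset.induction_on with
  | empty => simp
  | cons x B ih =>
    simp only [Multiset.map_cons, Multiset.sum_cons, Multiset.countP_cons, ih, weight]
    split_ifs <;> grind

lemma sum_countP_le_sum (hB : ∀ x ∈ B, 10 / 1000 ≤ x) :
    (10 * B.countP (· < 143 / 1000)
      + 143 * B.countP (fun x => 143 / 1000 ≤ x ∧ x < 334 / 1000)
      + 334 * B.countP (334 / 1000 ≤ ·) : ℝ) ≤ 1000 * B.sum := by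
  induction B using Multiset.induction_on with
  | empty => simp
  | cons x B ih =>
    simp only [Multiset.forall_mem_cons] at hB
    have := ih hB.2
    simp only [Multiset.sum_cons, Multiset.countP_cons]
    split_ifs <;> push_cast <;> grind

lemma IsBin.sum_countP_le (hB : IsBin k B) (hsize : ∀ x ∈ B, 10 / 1000 ≤ x) :
    10 * B.countP (· < 143 / 1000)
      + 143 * B.countP (fun x => 143 / 1000 ≤ x ∧ x < 334 / 1000)
      + 334 * B.countP (334 / 1000 ≤ ·) ≤ 1000 := by
  have hsum := (sum_countP_le_sum hsize).trans
    (mul_le_of_le_one_right (by norm_num : (0 : ℝ) ≤ 1000) hB.2)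
  exact_mod_cast hsum

lemma IsBin.card_mul_le_one (hB : IsBin k B) {a : ℝ} (hsize : ∀ x ∈ B, a ≤ x) :
    Multiset.card B * a ≤ 1 := by
  simpa using (Multiset.card_nsmul_le_sum hsize).trans hB.2

lemma IsBin.sum_weight_le_sixteen (hB : IsBin 9 B) (hsize : ∀ x ∈ B, 10 / 1000 ≤ x) :
    (B.map weight).sum ≤ 16 := by
  have hcard := hB.1
  have hcount := hB.sum_countP_le hsize
  rw [card_eq_sum_countP] at hcard
  rw [sum_weight_eq_sum_countP]
  have hlarge : B.countP (334 / 1000 ≤ ·) ≤ 2 := by omega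
  interval_cases B.countP (334 / 1000 ≤ ·) <;> omega

lemma IsBin.sum_weight_le_twelve (hB : IsBin k B) (hsize : ∀ x ∈ B, 143 / 1000 ≤ x) :
    (B.map weight).sum ≤ 12 := by
  have hcount := hB.sum_countP_le fun x hx => le_trans (by norm_num) (hsize x hx)
  have hsmall : B.countP (· < 143 / 1000) = 0 :=
    Multiset.countP_eq_zero.2 fun x hx => (hsize x hx).not_gt
  rw [sum_weight_eq_sum_countP]
  omega

lemma sum_weight_le_card_mul_four (B : Multiset ℝ) :
    (B.map weight).sum ≤ Multiset.card B * 4 := by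
  have hweight (x : ℝ) : weight x ≤ 4 := by
    unfold weight
    split_ifs <;> norm_num
  simpa using Multiset.sum_le_card_nsmul (B.map weight) 4 (by simp [hweight])

lemma IsBin.sum_weight_le_eight (hB : IsBin k B) (hsize : ∀ x ∈ B, 334 / 1000 ≤ x) :
    (B.map weight).sum ≤ 8 := by
  have hcard : Multiset.card B < 3 := by
    rify
    linarith [hB.card_mul_le_one hsize]
  have := sum_weight_le_card_mul_four B
  omega

lemma IsBin.sum_weight_le_four (hB : IsBin k B) (hsize : ∀ x ∈ B, 501 / 1000 ≤ x) :
    (B.map weight).sum ≤ 4 := by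
  have hcard : Multiset.card B < 2 := by
    rify
    linarith [hB.card_mul_le_one hsize]
  have := sum_weight_le_card_mul_four B
  omega

lemma IsBin.sum_weight_le_of_mem_drop_phases (hB : IsBin 9 B) {M j : ℕ} (hj : j < 4)
    (hmem : ∀ x ∈ B, x ∈ ((phases M).drop j).flatten) :
    (B.map weight).sum ≤ ∑ i ∈ Finset.Ico j 4, 4 := by
  interval_cases j <;>
    simp only [phases, List.drop_zero, List.drop_succ_cons, List.flatten_cons, List.flatten_nil,
      List.append_nil, List.mem_append, List.mem_replicate] at hmem
  · exact hB.sum_weight_le_sixteen (by grind)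
  · exact hB.sum_weight_le_twelve (by grind)
  · exact hB.sum_weight_le_eight (by grind)
  · exact hB.sum_weight_le_four (by grind)

end BinWeights

/-! ### The lower bound -/

lemma sum_weight_phases (M : ℕ) : ((phases M).flatten.map weight).sum = 756 * M := by
  norm_num [phases, weight]
  ring

lemma le_sum_onlineBins_phases (hA : OnlineValid 9 A) (M : ℕ) :
    189 * M ≤ ∑ i ∈ Finset.range 4, onlineBins A ((phases M).take (i + 1)).flatten := by
  have hvalid : ValidInput (phases M).flatten := validInput_flatten_take_phases M 4
  have hsum := sum_weight_le_sum_onlineBins (c := fun _ => 4) (hA _ hvalid)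
    fun j hj B hB hmem => hB.sum_weight_le_of_mem_drop_phases hj hmem
  rw [sum_weight_phases] at hsum
  simp only [smul_eq_mul, ← Finset.sum_mul, length_phases] at hsum
  omega

lemma le_OPT_phases (M i : ℕ) : 4 * M ≤ OPT 9 ((phases M).take (i + 1)).flatten := by
  have hlength : 36 * M ≤ ((phases M).take (i + 1)).flatten.length := by simp [phases]
  have := length_le_mul_OPT (k := 9) (by norm_num) (validInput_flatten_take_phases M (i + 1))
  omega

theorem online_asymp_lb_k9_general (A : List ℝ → ℕ) (hA : OnlineValid 9 A) (N : ℕ) :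
    ∃ L : List ℝ, ValidInput L ∧ N ≤ OPT 9 L ∧ (189 / 124 : ℝ) * OPT 9 L ≤ onlineBins A L := by
  obtain ⟨i, -, hi⟩ : ∃ i ∈ Finset.range 4, 189 * OPT 9 ((phases N).take (i + 1)).flatten
      ≤ 124 * onlineBins A ((phases N).take (i + 1)).flatten := by
    refine Finset.exists_le_of_sum_le (by simp) ?_
    rw [← Finset.mul_sum, ← Finset.mul_sum]
    linarith [sum_OPT_phases_le N, le_sum_onlineBins_phases hA N]
  refine ⟨((phases N).take (i + 1)).flatten, validInput_flatten_take_phases N _, ?_, ?_⟩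
  · linarith [le_OPT_phases N i]
  · rify at hi
    linarith

/-- For k = 9, the asymptotic competitive ratio of every deterministic
online algorithm is at least 189/124. -/
theorem online_asymp_lb_k9 (A : List ℝ → ℕ) (hA : OnlineValid 9 A) :
    ∀ ε : ℝ, 0 < ε → ∀ N : ℕ, ∃ L : List ℝ, ValidInput L ∧ N ≤ OPT 9 L ∧
      ((189 / 124 : ℝ) - ε) * (OPT 9 L : ℝ) ≤ (onlineBins A L : ℝ) := by
  intro ε hε N
  obtain ⟨L, hL, hN, hratio⟩ := online_asymp_lb_k9_general A hA N
  exact ⟨L, hL, hN, le_trans (by gcongr; linarith) hratio⟩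
end
end

section
/- For k ∈ {10, 11} and every deterministic online algorithm A for bin packing with cardinality constraint k, the asymptotic competitive ratio of A is at least (k² + 84k)/(k² + 48k + 36): for every ε > 0 and every N there exists an input L with OPT(L) ≥ N and A(L) ≥ ((k² + 84k)/(k² + 48k + 36) − ε)·OPT(L). This value equals 235/154 for k = 10 and 209/137 for k = 11. -/
/-!
An adaptive adversary forces the ratio `2k/(k+1)`, which is `20/11` for `k = 10` and `11/6` for
`k = 11`.

It first issues `n` tiny items. Each size is fixed before the item is packed, but by bisection on
the exponent the sizes can be steered so that, in hindsight, for some `s` every item that opened a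
new bin (a *large* item) has size at least `k s` and every other one (a *small* item) at most `s`.
Let `X` be the number of bins the algorithm uses so far. Next come `X` huge items of size
`1 - (k - 1) s`. A huge item fits with `k - 1` small items, but neither with a large item nor with
another huge one; as every bin of the algorithm contains a large item, it ends up with `2X` bins.

There are `X` large items, and `n ≤ k X`, hence at most `(k - 1) X` small ones. Packing `k - 1`
small items with each huge item, and the large items `k` to a bin, takes `X + ⌈X / k⌉` bins.
-/

open scoped Classical
noncomputable section

section AdversaryArgument

open Finset

/-! ### The tiny items -/

/-- The bisection keeps the threshold `q` free in `[p, p + 2 ^ r)` while `r` choices remain. -/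
lemma exists_adaptive_threshold (P : List ℕ → Prop) (r p : ℕ) :
    ∃ (E : List ℕ) (q : ℕ), E.length = r ∧ p ≤ q ∧ q < p + 2 ^ r ∧
      ∀ i (hi : i < E.length), p < E[i] ∧ (E[i] ≤ q ↔ P (E.take (i + 1))) := by
  induction r generalizing P p with
  | zero => exact ⟨[], p, by simp⟩
  | succ r ih =>
    set e := p + 2 ^ r
    by_cases hP : P [e]
    · obtain ⟨E, q, hlen, heq, hq, hE⟩ := ih (fun E => P (e :: E)) e
      refine ⟨e :: E, q, by simp [hlen], by omega, by omega, ?_⟩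
      rintro (_ | i) hi
      · simpa [hP, heq] using (by omega : p < e)
      · obtain ⟨hlt, hiff⟩ := hE i (by simpa using hi)
        exact ⟨(by omega : p < e).trans hlt, hiff⟩
    · obtain ⟨E, q, hlen, hpq, hq, hE⟩ := ih (fun E => P (e :: E)) p
      refine ⟨e :: E, q, by simp [hlen], hpq, by omega, ?_⟩
      rintro (_ | i) hi
      · simpa [hP] using (⟨by omega, by omega⟩ : p < e ∧ q < e)
      · exact hE i (by simpa using hi)

/-- `i` is the earliest index in its fibre under `f`; when `f` is a packing, item `i` opens its
bin. -/
def IsFirst {ι α : Type*} [LT ι] (f : ι → α) (i : ι) : Prop :=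
  ∀ j < i, f j ≠ f i

lemma exists_isFirst_eq {ι α : Type*} [LinearOrder ι] [WellFoundedLT ι] (f : ι → α) (i : ι) :
    ∃ j, IsFirst f j ∧ f j = f i := by
  obtain ⟨j, hj, hmin⟩ := wellFounded_lt.has_min {j | f j = f i} ⟨i, rfl⟩
  exact ⟨j, fun l hl he => hmin l (he.trans hj) hl, hj⟩

lemma card_filter_isFirst {ι α : Type*} [Fintype ι] [LinearOrder ι] [DecidableEq α] (f : ι → α) :
    #{i | IsFirst f i} = #(univ.image f) := by
  have hinj : Set.InjOn f ({i | IsFirst f i} : Finset ι) := by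
    intro i hi j hj hij
    simp only [coe_filter, mem_univ, true_and, Set.mem_ofPred_eq] at hi hj
    exact le_antisymm (not_lt.1 fun h => hi j h hij.symm) (not_lt.1 fun h => hj i h hij)
  rw [← card_image_of_injOn hinj]
  congr 1
  ext b
  simp only [mem_image, mem_filter, mem_univ, true_and]
  constructor
  · rintro ⟨i, -, rfl⟩
    exact ⟨i, rfl⟩
  · rintro ⟨i, rfl⟩
    exact exists_isFirst_eq f i

/-- The algorithm `A` puts the last item of the prefix `l` into a bin that no earlier item
uses. -/
def OpensBin (A : List ℝ → ℕ) (l : List ℝ) : Prop :=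
  ∀ j, j + 1 < l.length → A (l.take (j + 1)) ≠ A l

lemma opensBin_take_iff (A : List ℝ → ℕ) (L : List ℝ) (i : Fin L.length) :
    OpensBin A (L.take (i + 1)) ↔ IsFirst (onlinePacking A L) i := by
  have take_take {j : ℕ} (hj : j < i) : (L.take (i + 1)).take (j + 1) = L.take (j + 1) := by
    rw [List.take_take, min_eq_left (by omega)]
  have hlen : (L.take (i + 1)).length = i + 1 := by
    rw [List.length_take, min_eq_left (by omega)]
  constructor
  · intro h j hj
    simpa only [onlinePacking, take_take hj] using h j (by omega)
  · intro h j hj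
    have hji : j < i := by omega
    simpa only [onlinePacking, take_take hji] using h ⟨j, by omega⟩ hji

lemma exists_tiny_items {k : ℕ} (hk : 0 < k) (A : List ℝ → ℕ) (n : ℕ) :
    ∃ (M : List ℝ) (s : ℝ), M.length = n ∧ 0 < s ∧ k ^ 2 * s ≤ 1 ∧ ∀ i : Fin M.length,
      0 < M.get i ∧ M.get i ≤ 1 / k ∧
      (IsFirst (onlinePacking A M) i → k * s ≤ M.get i) ∧
      (¬ IsFirst (onlinePacking A M) i → M.get i ≤ s) := by
  set x : ℝ := 1 / k
  have hk0 : (0 : ℝ) < k := by exact_mod_cast hk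
  have hx0 : 0 < x := by positivity
  have hx1 : x ≤ 1 := (div_le_one hk0).2 (by exact_mod_cast hk)
  have hkx : k * x = 1 := mul_one_div_cancel hk0.ne'
  have hanti {a b : ℕ} (h : a ≤ b) : x ^ b ≤ x ^ a := pow_le_pow_of_le_one hx0.le hx1 h
  obtain ⟨E, q, hlen, hq, -, hE⟩ :=
    exists_adaptive_threshold (fun E => OpensBin A (E.map (x ^ ·))) n 1
  refine ⟨E.map (x ^ ·), x ^ (q + 1), by simpa using hlen, by positivity, ?_, fun i => ?_⟩
  · calc k ^ 2 * x ^ (q + 1) ≤ k ^ 2 * x ^ 2 :=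
          mul_le_mul_of_nonneg_left (hanti (by omega)) (sq_nonneg _)
      _ = 1 := by rw [← mul_pow, hkx, one_pow]
  · obtain ⟨hlt, hiff⟩ := hE i (by simpa using i.2)
    simp only [List.map_take, opensBin_take_iff] at hiff
    simp only [List.get_eq_getElem, List.getElem_map]
    refine ⟨by positivity, by simpa using hanti hlt.le, fun h => ?_, fun h => ?_⟩
    · rw [pow_succ', ← mul_assoc, hkx, one_mul]
      exact hanti (hiff.2 h)
    · exact hanti (not_le.1 (mt hiff.1 h))

/-! ### The optimum -/

section Optimum

variable {k : ℕ} {L : List ℝ}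

lemma IsFeasible.length_le_mul_binsUsed {f : Fin L.length → ℕ} (hf : IsFeasible k L f) :
    L.length ≤ k * binsUsed L f := by
  simpa [binsUsed] using
    card_le_mul_card_image (s := univ) (f := f) k fun b _ => (hf b).1

lemma IsFeasible.length_le_mul_OPT {f : Fin L.length → ℕ} (hf : IsFeasible k L f) :
    L.length ≤ k * OPT k L := by
  have hne : {n | ∃ g : Fin L.length → ℕ, IsFeasible k L g ∧ binsUsed L g = n}.Nonempty :=
    ⟨binsUsed L f, f, hf, rfl⟩
  obtain ⟨g, hg, hgn⟩ : ∃ g : Fin L.length → ℕ, IsFeasible k L g ∧ binsUsed L g = OPT k L :=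
    Nat.sInf_mem hne
  exact hgn ▸ hg.length_le_mul_binsUsed

lemma OPT_le_card_of_fibers {β : Type*} [Fintype β] (f : Fin L.length → β)
    (hcard : ∀ b, #{i | f i = b} ≤ k) (hsum : ∀ b, ∑ i with f i = b, L.get i ≤ 1) :
    OPT k L ≤ Fintype.card β := by
  let g : Fin L.length → ℕ := fun i => Fintype.equivFin β (f i)
  have hg (i j) : g i = g j ↔ f i = f j := by simp [g, Fin.val_inj]
  have hfeas : IsFeasible k L g := by
    intro b
    by_cases hb : ∃ i, g i = b
    · obtain ⟨i, rfl⟩ := hb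
      simpa only [hg] using ⟨hcard (f i), hsum (f i)⟩
    · simp [filter_eq_empty_iff.2 fun i _ hi => hb ⟨i, hi⟩]
  have hused : binsUsed L g ≤ Fintype.card β := by
    rw [← card_range (Fintype.card β)]
    refine card_le_card (image_subset_iff.2 fun i _ => ?_)
    exact mem_range.2 (Fin.is_lt _)
  exact le_trans (Nat.sInf_le ⟨g, hfeas, rfl⟩) hused

/-- Each bin `b` is divided into `k` slots of capacities `w b`, of which every item gets its own. -/
lemma OPT_le_card_of_slots {β : Type*} [Fintype β] (e : Fin L.length → β × Fin k)
    (he : e.Injective) (w : β → Fin k → ℝ) (hw0 : ∀ b j, 0 ≤ w b j)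
    (hw : ∀ i, L.get i ≤ w (e i).1 (e i).2) (hw1 : ∀ b, ∑ j, w b j ≤ 1) :
    OPT k L ≤ Fintype.card β := by
  have hinj (b) : Set.InjOn (fun i => (e i).2) ({i | (e i).1 = b} : Finset (Fin L.length)) := by
    intro i hi j hj hij
    simp only [coe_filter, mem_univ, true_and, Set.mem_ofPred_eq] at hi hj
    exact he (Prod.ext (hi.trans hj.symm) hij)
  refine OPT_le_card_of_fibers (fun i => (e i).1) (fun b => ?_) (fun b => ?_)
  · simpa using card_le_card_of_injOn _ (fun i _ => mem_univ (e i).2) (hinj b)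
  · calc ∑ i with (e i).1 = b, L.get i ≤ ∑ i with (e i).1 = b, w b (e i).2 :=
          sum_le_sum fun i hi => by simpa only [(mem_filter.1 hi).2] using hw i
      _ = ∑ j ∈ ({i | (e i).1 = b} : Finset _).image (fun i => (e i).2), w b j :=
          (sum_image (hinj b)).symm
      _ ≤ ∑ j, w b j := sum_le_univ_sum_of_nonneg (hw0 b)
      _ ≤ 1 := hw1 b

end Optimum

/-! ### Concatenated inputs -/

section Append

/-- The positions of `M ++ R` are the positions of `M` followed by those of `R`. -/
def appendEquiv (M R : List ℝ) : Fin M.length ⊕ Fin R.length ≃ Fin (M ++ R).length :=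
  finSumFinEquiv.trans (finCongr List.length_append.symm)

variable (M R : List ℝ)

lemma get_appendEquiv_inl (i : Fin M.length) :
    (M ++ R).get (appendEquiv M R (.inl i)) = M.get i := by
  simp [appendEquiv]

lemma get_appendEquiv_inr (j : Fin R.length) :
    (M ++ R).get (appendEquiv M R (.inr j)) = R.get j := by
  simp [appendEquiv]

lemma onlinePacking_appendEquiv_inl (A : List ℝ → ℕ) (i : Fin M.length) :
    onlinePacking A (M ++ R) (appendEquiv M R (.inl i)) = onlinePacking A M i := by
  simp [appendEquiv, onlinePacking, List.take_append_of_le_length (Nat.succ_le_of_lt i.2)]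

lemma binsUsed_append (f : Fin (M ++ R).length → ℕ) :
    binsUsed (M ++ R) f = #(univ.image (fun i => f (appendEquiv M R (.inl i))) ∪
      univ.image fun j => f (appendEquiv M R (.inr j))) := by
  unfold binsUsed
  congr 1
  ext b
  simp [(appendEquiv M R).surjective.exists]

end Append

/-- Huge items `Fin h` get slot `0` of `h` bins whose other slots take the small items; the large
items `P` get bins of their own. -/
lemma exists_injective_slot {α : Type*} [Fintype α] {P : α → Prop} {h c m : ℕ}
    (hP : #{i | P i} ≤ c * (m + 1)) (hnP : #{i | ¬ P i} ≤ h * m) :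
    ∃ slot : α ⊕ Fin h → (Fin h ⊕ Fin c) × Fin (m + 1), slot.Injective ∧
      (∀ i, P i → ∃ b j, slot (.inl i) = (.inr b, j)) ∧
      (∀ i, ¬ P i → ∃ b j, slot (.inl i) = (.inl b, Fin.succ j)) ∧
      ∀ b, slot (.inr b) = (.inl b, 0) := by
  obtain ⟨large⟩ : Nonempty ({i // P i} ↪ Fin c × Fin (m + 1)) :=
    Function.Embedding.nonempty_of_card_le <| by
      simpa only [Fintype.card_subtype, Fintype.card_prod, Fintype.card_fin] using hP
  obtain ⟨small⟩ : Nonempty ({i // ¬ P i} ↪ Fin h × Fin m) :=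
    Function.Embedding.nonempty_of_card_le <| by
      simpa only [Fintype.card_subtype, Fintype.card_prod, Fintype.card_fin] using hnP
  let largeSlot : {i // P i} → (Fin h ⊕ Fin c) × Fin (m + 1) := Prod.map .inr id ∘ large
  let smallSlot : {i // ¬ P i} → (Fin h ⊕ Fin c) × Fin (m + 1) := Prod.map .inl Fin.succ ∘ small
  have hlarge : largeSlot.Injective :=
    (Sum.inr_injective.prodMap Function.injective_id).comp large.injective
  have hsmall : smallSlot.Injective :=
    (Sum.inl_injective.prodMap (Fin.succ_injective m)).comp small.injective
  refine ⟨Sum.elim (Sum.elim largeSlot smallSlot ∘ (Equiv.sumCompl P).symm) fun b => (.inl b, 0),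
    ?_, fun i hi => ?_, fun i hi => ?_, fun b => rfl⟩
  · refine ((hlarge.sumElim hsmall ?_).comp (Equiv.injective _)).sumElim ?_ ?_
    · simp [largeSlot, smallSlot, Prod.ext_iff]
    · exact fun b b' hb => by simpa using hb
    · intro i b
      rw [Function.comp_apply]
      rcases (Equiv.sumCompl P).symm i with i | i <;> simp [largeSlot, smallSlot, Prod.ext_iff]
  · exact ⟨(large ⟨i, hi⟩).1, (large ⟨i, hi⟩).2, by
      simp [Equiv.sumCompl_symm_apply_of_pos hi, largeSlot, Prod.map]⟩
  · exact ⟨(small ⟨i, hi⟩).1, (small ⟨i, hi⟩).2, by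
      simp [Equiv.sumCompl_symm_apply_of_neg hi, smallSlot, Prod.map]⟩

lemma OPT_append_le {m c : ℕ} {M R : List ℝ} {s : ℝ} (P : Fin M.length → Prop)
    (hs0 : 0 ≤ s) (hs1 : m * s ≤ 1) (hP : ∀ i, P i → M.get i ≤ 1 / (m + 1))
    (hnP : ∀ i, ¬ P i → M.get i ≤ s) (hR : ∀ j, R.get j ≤ 1 - m * s)
    (hcP : #{i | P i} ≤ c * (m + 1)) (hcnP : #{i | ¬ P i} ≤ R.length * m) :
    OPT (m + 1) (M ++ R) ≤ R.length + c := by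
  obtain ⟨slot, hslot, hlarge, hsmall, hhuge⟩ := exists_injective_slot hcP hcnP
  let w : Fin R.length ⊕ Fin c → Fin (m + 1) → ℝ :=
    Sum.elim (fun _ => Fin.cons (1 - m * s) fun _ => s) fun _ _ => 1 / (m + 1)
  have hfit (z) : (M ++ R).get (appendEquiv M R z) ≤ w (slot z).1 (slot z).2 := by
    rcases z with i | j
    · rw [get_appendEquiv_inl]
      by_cases hi : P i
      · obtain ⟨b, j, hb⟩ := hlarge i hi
        rw [hb]
        exact hP i hi
      · obtain ⟨b, j, hb⟩ := hsmall i hi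
        rw [hb]
        exact hnP i hi
    · rw [get_appendEquiv_inr, hhuge]
      exact hR j
  have hw0 : ∀ b j, 0 ≤ w b j := by
    rintro (_ | _) j
    · exact Fin.cases (sub_nonneg.2 hs1) (fun _ => hs0) j
    · exact one_div_nonneg.2 (by positivity)
  have hw1 : ∀ b, ∑ j, w b j ≤ 1 := by
    rintro (_ | _)
    · simp [w, Fin.sum_univ_succ]
    · simp [w, mul_inv_cancel₀ (by positivity : (m + 1 : ℝ) ≠ 0)]
  simpa using OPT_le_card_of_slots (slot ∘ (appendEquiv M R).symm)
    (hslot.comp (Equiv.injective _)) w hw0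
    (fun i => by simpa using hfit ((appendEquiv M R).symm i)) hw1

lemma IsFeasible.ne_of_one_lt_add {k : ℕ} {L : List ℝ} {f : Fin L.length → ℕ}
    (hf : IsFeasible k L f) (hL : ValidInput L) {i j : Fin L.length} (hij : i ≠ j)
    (h : 1 < L.get i + L.get j) : f i ≠ f j := by
  intro he
  have hsub : {i, j} ⊆ ({l | f l = f j} : Finset _) := by
    simp [insert_subset_iff, he]
  have hle : L.get i + L.get j ≤ ∑ l with f l = f j, L.get l := by
    rw [← sum_pair hij]
    exact sum_le_sum_of_subset_of_nonneg hsub fun l _ _ => (hL _ (L.get_mem l)).1.le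
  exact h.not_ge (hle.trans (hf (f j)).2)

lemma onlineBins_add_length_le {k : ℕ} {A : List ℝ → ℕ} (hA : OnlineValid k A) {M R : List ℝ}
    (hL : ValidInput (M ++ R)) (hR : ∀ j, 1 / 2 < R.get j)
    (hMR : ∀ i j, IsFirst (onlinePacking A M) i → 1 < M.get i + R.get j) :
    onlineBins A M + R.length ≤ onlineBins A (M ++ R) := by
  have hf := hA _ hL
  have hinj : Function.Injective fun j => onlinePacking A (M ++ R) (appendEquiv M R (.inr j)) := by
    intro j j' h
    by_contra hne
    refine hf.ne_of_one_lt_add hL (by simpa using hne) ?_ h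
    simp only [get_appendEquiv_inr]
    linarith [hR j, hR j']
  have hdisj : Disjoint (univ.image (onlinePacking A M))
      (univ.image fun j => onlinePacking A (M ++ R) (appendEquiv M R (.inr j))) := by
    simp only [disjoint_left, mem_image, mem_univ, true_and]
    rintro _ ⟨i, rfl⟩ ⟨j, hj⟩
    obtain ⟨i', hi', heq⟩ := exists_isFirst_eq (onlinePacking A M) i
    refine hf.ne_of_one_lt_add hL (i := appendEquiv M R (.inl i')) (by simp) ?_
      ((onlinePacking_appendEquiv_inl M R A i').trans (heq.trans hj.symm))
    simpa only [get_appendEquiv_inl, get_appendEquiv_inr] using hMR i' j hi'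
  rw [onlineBins, onlineBins, binsUsed_append]
  simp only [onlinePacking_appendEquiv_inl]
  rw [card_union_of_disjoint hdisj, card_image_of_injective _ hinj, card_univ, Fintype.card_fin,
    binsUsed]

/-! ### The adversary's input -/

lemma OnlineValid.pos {k : ℕ} {A : List ℝ → ℕ} (hA : OnlineValid k A) : 0 < k := by
  have hlen := (hA [1] (by simp [ValidInput])).length_le_mul_OPT
  exact Nat.pos_of_mul_pos_right (Nat.one_pos.trans_le hlen)

lemma OnlineValid.card_not_isFirst_le {m : ℕ} {A : List ℝ → ℕ} (hA : OnlineValid (m + 1) A)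
    {M : List ℝ} (hM : ValidInput M) :
    #{i | ¬ IsFirst (onlinePacking A M) i} ≤ onlineBins A M * m := by
  have hlen : M.length ≤ (m + 1) * onlineBins A M := (hA M hM).length_le_mul_binsUsed
  have hfirst : #{i | IsFirst (onlinePacking A M) i} = onlineBins A M :=
    card_filter_isFirst (onlinePacking A M)
  have hsplit := card_filter_add_card_filter_not (s := univ) (IsFirst (onlinePacking A M))
  rw [card_univ, Fintype.card_fin] at hsplit
  linarith

lemma OnlineValid.mul_OPT_append_le {m : ℕ} {A : List ℝ → ℕ} (hA : OnlineValid (m + 1) A)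
    {M R : List ℝ} {s : ℝ} (hM : ValidInput M) (hs0 : 0 ≤ s) (hs1 : m * s ≤ 1)
    (hle : ∀ i, M.get i ≤ 1 / (m + 1))
    (hsmall : ∀ i, ¬ IsFirst (onlinePacking A M) i → M.get i ≤ s)
    (hR : ∀ j, R.get j ≤ 1 - m * s) (hlen : R.length = onlineBins A M) :
    (m + 1) * OPT (m + 1) (M ++ R) ≤ (m + 2) * onlineBins A M + m := by
  set X := onlineBins A M
  have hceil : X ≤ (m + 1) * (X ⌈/⌉ (m + 1)) := le_smul_ceilDiv m.succ_pos
  have hceil' : (m + 1) * (X ⌈/⌉ (m + 1)) ≤ X + m := Nat.mul_div_le _ _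
  have hopt : OPT (m + 1) (M ++ R) ≤ R.length + X ⌈/⌉ (m + 1) := by
    refine OPT_append_le (IsFirst (onlinePacking A M)) hs0 hs1 (fun i _ => hle i) hsmall hR ?_ ?_
    · rw [card_filter_isFirst, mul_comm]
      exact hceil
    · exact hlen ▸ hA.card_not_isFirst_le hM
  rw [hlen] at hopt
  calc (m + 1) * OPT (m + 1) (M ++ R)
      ≤ (m + 1) * (X + X ⌈/⌉ (m + 1)) := by gcongr
    _ ≤ (m + 2) * X + m := by linarith

lemma exists_adversary_input {k : ℕ} {A : List ℝ → ℕ} (hA : OnlineValid k A) (n : ℕ) :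
    ∃ L : List ℝ, ValidInput L ∧ n ≤ L.length ∧
      2 * k * OPT k L ≤ (k + 1) * onlineBins A L + 2 * k := by
  obtain ⟨m, rfl⟩ := Nat.exists_eq_add_one.2 hA.pos
  obtain ⟨M, s, hlen, hs0, hs, hM⟩ := exists_tiny_items hA.pos A n
  push_cast at hs hM
  have hms : m * s < 1 / 2 := by nlinarith [mul_nonneg (sq_nonneg (m : ℝ)) hs0.le]
  have hms0 : 0 ≤ m * s := by positivity
  have hMvalid : ValidInput M := by
    intro z hz
    obtain ⟨i, rfl⟩ := List.mem_iff_get.1 hz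
    exact ⟨(hM i).1, (hM i).2.1.trans (div_le_one_of_le₀ (by simp) (by positivity))⟩
  set X := onlineBins A M
  set R := List.replicate X (1 - m * s)
  have hR (j) : R.get j = 1 - m * s := by simp [R]
  have hRlen : R.length = X := List.length_replicate
  have hL : ValidInput (M ++ R) := by
    intro z hz
    rcases List.mem_append.1 hz with hz | hz
    · exact hMvalid z hz
    · rw [List.eq_of_mem_replicate hz]
      constructor <;> linarith
  have honline : 2 * X ≤ onlineBins A (M ++ R) := by
    have := onlineBins_add_length_le hA hL (fun j => by linarith [hR j])
      fun i j hi => by linarith [hR j, (hM i).2.2.1 hi]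
    omega
  have hopt : (m + 1) * OPT (m + 1) (M ++ R) ≤ (m + 2) * X + m :=
    hA.mul_OPT_append_le hMvalid hs0.le (by linarith) (fun i => (hM i).2.1)
      (fun i => (hM i).2.2.2) (fun j => (hR j).le) hRlen
  refine ⟨M ++ R, hL, by simp [hlen], ?_⟩
  calc 2 * (m + 1) * OPT (m + 1) (M ++ R)
      ≤ (m + 1 + 1) * (2 * X) + 2 * (m + 1) := by linarith
    _ ≤ (m + 1 + 1) * onlineBins A (M ++ R) + 2 * (m + 1) := by gcongr

theorem online_asymp_lb_k1011_general (k : ℕ) (A : List ℝ → ℕ) (hA : OnlineValid k A) :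
    ∀ ε : ℝ, 0 < ε → ∀ N : ℕ, ∃ L : List ℝ, ValidInput L ∧ N ≤ OPT k L ∧
      (2 * (k : ℝ) / (k + 1) - ε) * (OPT k L : ℝ) ≤ (onlineBins A L : ℝ) := by
  intro ε hε N
  obtain ⟨L, hL, hlen, hbound⟩ := exists_adversary_input hA (k * max N ⌈2 / ε⌉₊)
  have hOPT : max N ⌈2 / ε⌉₊ ≤ OPT k L :=
    Nat.le_of_mul_le_mul_left (hlen.trans (hA L hL).length_le_mul_OPT) hA.pos
  have hεOPT : 2 ≤ ε * OPT k L :=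
    (div_le_iff₀' hε).1 (Nat.ceil_le.1 ((le_max_right _ _).trans hOPT))
  have hratio : 2 * (k : ℝ) / (k + 1) * OPT k L ≤ onlineBins A L + 2 := by
    have hcast : 2 * (k : ℝ) * OPT k L ≤ (k + 1) * onlineBins A L + 2 * k := by
      exact_mod_cast hbound
    rw [div_mul_eq_mul_div, div_le_iff₀ (by positivity)]
    linarith
  exact ⟨L, hL, (le_max_left _ _).trans hOPT, by linarith⟩

end AdversaryArgument

/-- For k ∈ {10, 11}, the asymptotic competitive ratio of every
deterministic online algorithm is at least (k² + 84k)/(k² + 48k + 36). -/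
theorem online_asymp_lb_k1011 (k : ℕ) (hk : k = 10 ∨ k = 11)
    (A : List ℝ → ℕ) (hA : OnlineValid k A) :
    ∀ ε : ℝ, 0 < ε → ∀ N : ℕ, ∃ L : List ℝ, ValidInput L ∧ N ≤ OPT k L ∧
      (((k : ℝ) ^ 2 + 84 * k) / ((k : ℝ) ^ 2 + 48 * k + 36) - ε) * (OPT k L : ℝ)
        ≤ (onlineBins A L : ℝ) := by
  intro ε hε N
  obtain ⟨L, hL, hN, hL'⟩ := online_asymp_lb_k1011_general k A hA ε hε N
  have hratio : ((k : ℝ) ^ 2 + 84 * k) / ((k : ℝ) ^ 2 + 48 * k + 36) ≤ 2 * (k : ℝ) / (k + 1) := by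
    rcases hk with rfl | rfl <;> norm_num
  exact ⟨L, hL, hN, hL'.trans' (by gcongr)⟩
end
end
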